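/- For every m ≥ 0 and the binary word w = (0011)^m (the m-fold repetition of 0011), there exists r ≥ 0 such that occ(w, (01)^r) = maxocc(w); that is, some most frequent subword of (0011)^m has the form (01)^r. -/

import Mathlib

open List Real

/-- `occ w u` is the number of occurrences of `u` as a subword (subsequence) of `w`,
i.e. the multiplicity of `u` among the `2^|w|` sublists of `w`. -/
def occ {α : Type*} [DecidableEq α] (w u : List α) : ℕ := w.sublists.count u

/-- `maxocc w` is the maximal number of occurrences of any subword of `w`. -/
noncomputable def maxocc {α : Type*} [DecidableEq α] (w : List α) : ℕ :=
  sSup {n : ℕ | ∃ u : List α, occ w u = n}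

/-- `rep v m` is the concatenation of `m` copies of the word `v`. -/
def rep {α : Type*} (v : List α) (m : ℕ) : List α := (List.replicate m v).flatten

/-!
A most frequent subword of shortest length of `w = (0011)^m` is alternating. Write `b` for the
letter other than `a` and take an occurrence of `x a a z` in `w`. If the two displayed letters lie
in the same block of `w`, deleting either of them leaves an occurrence of `x a z`; if they lie in
different blocks, a whole block `bb` separates them, and inserting either of its letters gives an
occurrence of `x a b a z`. Blocks having length two, this yields
`2 occ(w, x a a z) ≤ occ(w, x a z) + occ(w, x a b a z)`, which is impossible when `x a a z` is most
frequent and the shorter word `x a z` is not.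

As `w` starts with `0` and ends with `1`, a word starting with `1` may be preceded by `0`, and one
ending in `0` followed by `1`, without losing occurrences; this leads to some `(01)^r`.
-/

section Occ

variable {α : Type*} [DecidableEq α]

lemma occ_nil_cons (a : α) (u : List α) : occ [] (a :: u) = 0 := by
  simp [occ]

lemma occ_nil_right (w : List α) : occ w [] = 1 := by
  rw [occ, (sublists_perm_sublists' w).count_eq]
  induction w with
  | nil => simp
  | cons c w ih =>
    rw [sublists'_cons, count_append, ih, Nat.add_eq_left, count_eq_zero]
    simp

lemma occ_cons_cons (c a : α) (w u : List α) :
    occ (c :: w) (a :: u) = occ w (a :: u) + if c = a then occ w u else 0 := by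
  simp only [occ, (sublists_perm_sublists' _).count_eq, sublists'_cons, count_append]
  congr 1
  split_ifs with h
  · subst h
    exact count_map_of_injective _ _ cons_injective _
  · rw [count_eq_zero]
    simp [h]

lemma occ_reverse (w u : List α) : occ w.reverse u.reverse = occ w u := by
  rw [occ, sublists_reverse, count_map_of_injective _ _ reverse_injective, occ,
    (sublists_perm_sublists' w).count_eq]

lemma occ_le_occ_cons_left (c : α) (w u : List α) : occ w u ≤ occ (c :: w) u := by
  cases u with
  | nil => simp only [occ_nil_right, le_refl]
  | cons a u => exact occ_cons_cons c a w u ▸ Nat.le_add_right _ _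

lemma occ_le_occ_cons_right {c : α} {w u : List α} (hw : w.head? = some c)
    (hu : u.head? ≠ some c) : occ w u ≤ occ w (c :: u) := by
  obtain ⟨w, rfl⟩ := head?_eq_some_iff.1 hw
  have hskip : occ (c :: w) u = occ w u := by
    cases u with
    | nil => simp only [occ_nil_right]
    | cons a u =>
      have hca : c ≠ a := fun h => hu (by simp [h])
      rw [occ_cons_cons, if_neg hca, add_zero]
  rw [hskip, occ_cons_cons, if_pos rfl]
  exact Nat.le_add_left _ _

lemma occ_le_occ_concat_right {c : α} {w u : List α} (hw : w.getLast? = some c)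
    (hu : u.getLast? ≠ some c) : occ w u ≤ occ w (u ++ [c]) := by
  rw [← occ_reverse w u, ← occ_reverse w (u ++ [c]), reverse_concat]
  exact occ_le_occ_cons_right (by rwa [head?_reverse]) (by rwa [head?_reverse])

lemma exists_isChain_ne_head?_eq_occ_le {u w : List α} {c : α} (hu : u.IsChain (· ≠ ·))
    (hw : w.head? = some c) :
    ∃ u' : List α, u'.IsChain (· ≠ ·) ∧ u'.head? = some c ∧ occ w u ≤ occ w u' := by
  by_cases hhead : u.head? = some c
  · exact ⟨u, hu, hhead, le_rfl⟩
  · have hcu : (c :: u).IsChain (· ≠ ·) := isChain_cons.2 ⟨fun _ hb hcb => hhead (hcb ▸ hb), hu⟩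
    exact ⟨c :: u, hcu, head?_cons, occ_le_occ_cons_right hw hhead⟩

-- The multiset `S` lists what remains of `w` behind the last letter of each occurrence of `x`.
lemma exists_occ_append_eq_sum (w x : List α) :
    ∃ S : Multiset (List α), (∀ s ∈ S, s <:+ w) ∧
      ∀ y, occ w (x ++ y) = (S.map fun s => occ s y).sum := by
  induction w generalizing x with
  | nil =>
    cases x with
    | nil => exact ⟨{[]}, by simp, by simp⟩
    | cons e x => exact ⟨0, by simp, by simp [occ_nil_cons]⟩
  | cons c w ih =>
    cases x with
    | nil => exact ⟨{c :: w}, by simp, by simp⟩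
    | cons e x =>
      obtain ⟨S, hS, hS_sum⟩ := ih (e :: x)
      obtain ⟨T, hT, hT_sum⟩ := ih x
      have hS_cons : ∀ s ∈ S, s <:+ c :: w := fun s hs => (hS s hs).trans (suffix_cons c w)
      by_cases hce : c = e
      · refine ⟨S + T, fun s hs => ?_, fun y => ?_⟩
        · rcases Multiset.mem_add.1 hs with hs | hs
          · exact hS_cons s hs
          · exact (hT s hs).trans (suffix_cons c w)
        · rw [cons_append, occ_cons_cons, if_pos hce, ← cons_append, hS_sum, hT_sum,
            Multiset.map_add, Multiset.sum_add]
      · refine ⟨S, hS_cons, fun y => ?_⟩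
        rw [cons_append, occ_cons_cons, if_neg hce, add_zero, ← cons_append, hS_sum]

lemma bddAbove_occ (w : List α) : BddAbove {n : ℕ | ∃ u : List α, occ w u = n} := by
  refine ⟨w.sublists.length, ?_⟩
  rintro _ ⟨u, rfl⟩
  exact count_le_length

lemma occ_le_maxocc (w u : List α) : occ w u ≤ maxocc w :=
  le_csSup (bddAbove_occ w) ⟨u, rfl⟩

lemma exists_occ_eq_maxocc (w : List α) : ∃ u, occ w u = maxocc w := by
  have hmem : maxocc w ∈ {n : ℕ | ∃ u : List α, occ w u = n} :=
    Nat.sSup_mem ⟨_, [], rfl⟩ (bddAbove_occ w)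
  exact hmem

end Occ

section Rep

variable {α : Type*}

lemma rep_zero (v : List α) : rep v 0 = [] := by simp [rep]

lemma rep_succ (v : List α) (n : ℕ) : rep v (n + 1) = v ++ rep v n := by
  simp [rep, replicate_succ]

lemma rep_succ' (v : List α) (n : ℕ) : rep v (n + 1) = rep v n ++ v := by
  simp [rep, replicate_succ']

end Rep

section Double

variable {α : Type*}

/-- The word obtained from `v` by writing every letter twice. For `v` without two equal adjacent
letters these are the words all of whose blocks have length two, such as `(0011)^m`. -/
def double (v : List α) : List α := v.flatMap fun a => [a, a]

lemma double_nil : double ([] : List α) = [] := rfl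

lemma double_cons (c : α) (v : List α) : double (c :: v) = c :: c :: double v := rfl

lemma double_append (v v' : List α) : double (v ++ v') = double v ++ double v' :=
  flatMap_append

lemma double_rep (v : List α) (m : ℕ) : double (rep v m) = rep (double v) m := by
  induction m with
  | zero => simp only [rep_zero, double_nil]
  | succ m ih => rw [rep_succ, double_append, ih, rep_succ]

variable [DecidableEq α] [Fintype α]

lemma two_mul_occ_double_cons_le_sum {v : List α} {a : α} (hv : v.head? ≠ some a) (z : List α) :
    2 * occ (double v) (a :: z) ≤ ∑ b ∈ Finset.univ.erase a, occ (double v) (b :: a :: z) := by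
  cases v with
  | nil => simp [double_nil, occ_nil_cons]
  | cons d v =>
    have hda : d ≠ a := fun h => hv (by simp [h])
    calc 2 * occ (double (d :: v)) (a :: z)
        ≤ occ (double (d :: v)) (d :: a :: z) := by
          simp only [double_cons, occ_cons_cons, if_neg hda, if_true]
          omega
      _ ≤ ∑ b ∈ Finset.univ.erase a, occ (double (d :: v)) (b :: a :: z) :=
          Finset.single_le_sum (f := fun b => occ (double (d :: v)) (b :: a :: z))
            (fun _ _ => Nat.zero_le _) (Finset.mem_erase.2 ⟨hda, Finset.mem_univ d⟩)

lemma two_mul_occ_suffix_double_le {v s : List α} (hv : v.IsChain (· ≠ ·)) (hs : s <:+ double v)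
    (a : α) (z : List α) :
    2 * occ s (a :: a :: z) ≤
      occ s (a :: z) + ∑ b ∈ Finset.univ.erase a, occ s (a :: b :: a :: z) := by
  induction v generalizing s with
  | nil => simp [suffix_nil.1 hs, occ_nil_cons]
  | cons c v ih =>
    have ih_double := ih hv.tail suffix_rfl
    rw [double_cons, suffix_cons_iff, suffix_cons_iff] at hs
    by_cases hca : c = a
    · subst hca
      have hsep : 2 * occ (double v) (c :: z) ≤
          ∑ b ∈ Finset.univ.erase c, occ (double v) (b :: c :: z) :=
        two_mul_occ_double_cons_le_sum (fun h => (isChain_cons.1 hv).1 c h rfl) z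
      have hmono := occ_le_occ_cons_left c (double v) z
      rcases hs with rfl | rfl | hs
      · simp only [occ_cons_cons, if_true, Finset.sum_add_distrib]
        omega
      · simp only [occ_cons_cons, if_true, Finset.sum_add_distrib]
        omega
      · exact ih hv.tail hs
    · rcases hs with rfl | rfl | hs
      · simpa only [occ_cons_cons c a, if_neg hca, add_zero] using ih_double
      · simpa only [occ_cons_cons c a, if_neg hca, add_zero] using ih_double
      · exact ih hv.tail hs

lemma two_mul_occ_double_le {v : List α} (hv : v.IsChain (· ≠ ·)) (x : List α) (a : α)
    (z : List α) :
    2 * occ (double v) (x ++ a :: a :: z) ≤ occ (double v) (x ++ a :: z) +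
      ∑ b ∈ Finset.univ.erase a, occ (double v) (x ++ a :: b :: a :: z) := by
  obtain ⟨S, hS, hsum⟩ := exists_occ_append_eq_sum (double v) x
  simp only [hsum, ← Multiset.sum_map_mul_left, ← Multiset.sum_map_sum, ← Multiset.sum_map_add]
  exact Multiset.sum_map_le_sum_map _ _ fun s hs => two_mul_occ_suffix_double_le hv (hS s hs) a z

end Double

lemma isChain_ne_of_minimalFor_length {v u : List (Fin 2)} (hv : v.IsChain (· ≠ ·))
    (hu : MinimalFor (fun u => occ (double v) u = maxocc (double v)) length u) :
    u.IsChain (· ≠ ·) := by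
  rw [isChain_iff_forall_rel_of_append_cons_cons]
  rintro a _ x z rfl rfl
  have hshort : occ (double v) (x ++ a :: z) < maxocc (double v) := by
    refine (occ_le_maxocc _ _).lt_of_ne fun h => ?_
    simpa using hu.2 h
  have hother : Finset.univ.erase a = {1 - a} := by
    clear * -
    decide +revert
  have hineq := two_mul_occ_double_le hv x a z
  rw [hother, Finset.sum_singleton] at hineq
  have hmax := hu.1
  have hlong := occ_le_maxocc (double v) (x ++ a :: (1 - a) :: a :: z)
  omega

lemma exists_isChain_ne_occ_double_eq_maxocc {v : List (Fin 2)} (hv : v.IsChain (· ≠ ·)) :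
    ∃ u : List (Fin 2), u.IsChain (· ≠ ·) ∧ occ (double v) u = maxocc (double v) := by
  obtain ⟨u, hu⟩ := exists_minimalFor_of_wellFoundedLT
    (fun u => occ (double v) u = maxocc (double v)) length (exists_occ_eq_maxocc _)
  exact ⟨u, isChain_ne_of_minimalFor_length hv hu, hu.1⟩

lemma isChain_ne_rep_pair {α : Type*} {a b : α} (hab : a ≠ b) (m : ℕ) :
    (rep [a, b] m).IsChain (· ≠ ·) := by
  rw [rep, isChain_flatten (by simp [mem_replicate])]
  exact ⟨by simp [mem_replicate, hab], isChain_replicate_of_rel m (by simp [hab.symm])⟩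

lemma exists_eq_rep_zero_one_or : ∀ u : List (Fin 2), u.IsChain (· ≠ ·) → u.head? ≠ some 1 →
    ∃ r, u = rep [0, 1] r ∨ u = rep [0, 1] r ++ [0]
  | [], _, _ => ⟨0, .inl (rep_zero _).symm⟩
  | [a], _, hhead => by
    have ha : a ≠ 1 := by simpa using hhead
    obtain rfl : a = 0 := by omega
    exact ⟨0, .inr (by rw [rep_zero, nil_append])⟩
  | a :: b :: u, hu, hhead => by
    obtain ⟨hab, hbu⟩ := isChain_cons_cons.1 hu
    have ha : a ≠ 1 := by simpa using hhead
    obtain rfl : a = 0 := by omega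
    obtain rfl : b = 1 := by omega
    obtain ⟨hhead_tail, hu_tail⟩ := isChain_cons.1 hbu
    obtain ⟨r, hr⟩ := exists_eq_rep_zero_one_or u hu_tail fun h => hhead_tail 1 h rfl
    exact ⟨r + 1, by simpa [rep_succ] using hr⟩

lemma exists_occ_le_occ_rep_zero_one {w u : List (Fin 2)} (hw_head : w.head? = some 0)
    (hw_last : w.getLast? = some 1) (hu : u.IsChain (· ≠ ·)) :
    ∃ r, occ w u ≤ occ w (rep [0, 1] r) := by
  obtain ⟨u', hu', hhead, hle⟩ := exists_isChain_ne_head?_eq_occ_le hu hw_head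
  obtain ⟨r, rfl | rfl⟩ := exists_eq_rep_zero_one_or u' hu' (by simp [hhead])
  · exact ⟨r, hle⟩
  · refine ⟨r + 1, ?_⟩
    calc occ w u ≤ occ w (rep [0, 1] r ++ [0]) := hle
      _ ≤ occ w (rep [0, 1] r ++ [0] ++ [1]) := occ_le_occ_concat_right hw_last (by simp)
      _ = occ w (rep [0, 1] (r + 1)) := by rw [rep_succ', append_assoc, singleton_append]

theorem stmt_8 (m : ℕ) :
    ∃ r : ℕ, occ (rep ([0, 0, 1, 1] : List (Fin 2)) m) (rep [0, 1] r) =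
      maxocc (rep ([0, 0, 1, 1] : List (Fin 2)) m) := by
  have hw : double (rep ([0, 1] : List (Fin 2)) m) = rep [0, 0, 1, 1] m := double_rep _ _
  obtain ⟨u, hu, hmax⟩ :=
    exists_isChain_ne_occ_double_eq_maxocc (isChain_ne_rep_pair Fin.zero_ne_one m)
  rw [hw] at hmax
  obtain ⟨r, hr⟩ : ∃ r, occ (rep [0, 0, 1, 1] m) u ≤
      occ (rep ([0, 0, 1, 1] : List (Fin 2)) m) (rep [0, 1] r) := by
    cases m with
    | zero => exact ⟨0, by cases u <;> simp [rep_zero, occ_nil_cons]⟩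
    | succ m =>
      exact exists_occ_le_occ_rep_zero_one (by simp [rep_succ]) (by simp [rep_succ']) hu
  exact ⟨r, (occ_le_maxocc _ _).antisymm (hmax ▸ hr)⟩
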